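/- Let (3/4)·log 3 ≤ D ≤ 1 and let f ∈ 𝒜 satisfy f(z) ≠ 0 and |zf'(z)/f(z) − 1| < D for z ∈ 𝔻\{0} (i.e. f ∈ S*(1 + Dz), the Janowski class with E = 0), with Ω = f(𝔻). Let g be analytic on 𝔻 with g(0) = 0 and g ≺ f, and write g(z) = Σ_{k=1}^∞ b_k z^k. Let r₀ be the unique root in (0, 1) of the equation r·e^{D(1+r)} = 1. Then for every r with 0 ≤ r ≤ r₀, Σ_{k=1}^∞ |b_k| r^k ≤ dist(0, ∂Ω), the Euclidean distance from f(0) = 0 to the boundary of Ω. -/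

import Mathlib

open Complex Metric Set

noncomputable section

/-- The open unit disk in `ℂ`. -/
def 𝔻 : Set ℂ := Metric.ball 0 1

/-- The class `𝒜` of analytic functions on `𝔻` normalized by `f 0 = 0`, `f' 0 = 1`. -/
def IsClassA (f : ℂ → ℂ) : Prop :=
  DifferentiableOn ℂ f 𝔻 ∧ f 0 = 0 ∧ deriv f 0 = 1

/-- `g` is subordinate to `F` on the unit disk. -/
def Subordinate (g F : ℂ → ℂ) : Prop :=
  ∃ ω : ℂ → ℂ, DifferentiableOn ℂ ω 𝔻 ∧ ω 0 = 0 ∧ (∀ z ∈ 𝔻, ω z ∈ 𝔻) ∧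
    ∀ z ∈ 𝔻, g z = F (ω z)

/-- `ψ` is a Ma-Minda function: analytic and univalent on `𝔻`, `Re ψ > 0`, `ψ 0 = 1`,
`ψ' 0 > 0`, with real Taylor coefficients (expressed via `ψ (conj z) = conj (ψ z)`). -/
def MaMinda (ψ : ℂ → ℂ) : Prop :=
  DifferentiableOn ℂ ψ 𝔻 ∧ Set.InjOn ψ 𝔻 ∧ (∀ z ∈ 𝔻, 0 < (ψ z).re) ∧
    ψ 0 = 1 ∧ 0 < (deriv ψ 0).re ∧ (deriv ψ 0).im = 0 ∧
    (∀ z ∈ 𝔻, ψ (starRingEnd ℂ z) = starRingEnd ℂ (ψ z))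

/-- The Ma-Minda starlike class `S*(ψ)`. -/
def StarlikeMM (ψ f : ℂ → ℂ) : Prop :=
  IsClassA f ∧ (∀ z ∈ 𝔻, z ≠ 0 → f z ≠ 0) ∧
    Subordinate (fun z => if z = 0 then 1 else z * deriv f z / f z) ψ

/-- The Ma-Minda convex class `C(ψ)`. -/
def ConvexMM (ψ f : ℂ → ℂ) : Prop :=
  IsClassA f ∧ (∀ z ∈ 𝔻, deriv f z ≠ 0) ∧
    Subordinate (fun z => 1 + z * deriv (deriv f) z / deriv f z) ψ

/-- `f` is starlike of order `α`. -/
def StarlikeOrder (α : ℝ) (f : ℂ → ℂ) : Prop :=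
  IsClassA f ∧ (∀ z ∈ 𝔻, z ≠ 0 → f z ≠ 0) ∧
    ∀ z ∈ 𝔻, z ≠ 0 → α < (z * deriv f z / f z).re

/-- `f` is a (normalized) convex function on `𝔻`. -/
def IsConvexFn (f : ℂ → ℂ) : Prop :=
  IsClassA f ∧ (∀ z ∈ 𝔻, deriv f z ≠ 0) ∧
    ∀ z ∈ 𝔻, 0 < (1 + z * deriv (deriv f) z / deriv f z).re

/-!
Write `M_f(r) = ∑ |aₙ| rⁿ` for the majorant series of `f = ∑ aₙ zⁿ`. If `|ω z| ≤ ρ |z|` on `𝔻`,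
then `(ω z / z) ^ j` is bounded by `ρ ^ j`, and Bohr's theorem gives
`M_{ω ^ j}(r) ≤ (ρ r) ^ j` for `r ≤ 1/3`. Expanding `F ∘ ω` in powers of `ω` yields
`M_{F ∘ ω}(r) ≤ M_F(ρ r)`.

The condition on `z f' / f` means that `f = z exp h` with `|h z| ≤ D |z|`. Taking `F = exp`, `ω = h`
and then `F = f` with the Schwarz function of `g` gives `M_g(r) ≤ M_f(r) ≤ r e^{D r}`. On the other
hand `|f z| ≥ e^{-D} |z|`, so `f(𝔻)` contains the disk of radius `e^{-D}`. Now
`r e^{D r} ≤ e^{-D}` is equivalent to `r e^{D (1 + r)} ≤ 1`, that is to `r ≤ r₀`, and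
`D ≥ (3/4) log 3` is exactly the condition for `r₀ ≤ 1/3`.
-/

open scoped NNReal ENNReal Topology ComplexConjugate

/-- The `n`-th Taylor coefficient at `c` of a function of one complex variable. -/
def taylorCoeff (f : ℂ → ℂ) (c : ℂ) (n : ℕ) : ℂ :=
  iteratedDeriv n f c / n.factorial

section TaylorCoeff

variable {f g : ℂ → ℂ} {c : ℂ}

lemma taylorCoeff_zero (f : ℂ → ℂ) (c : ℂ) : taylorCoeff f c 0 = f c := by
  simp [taylorCoeff]

lemma taylorCoeff_congr (hfg : f =ᶠ[𝓝 c] g) (n : ℕ) : taylorCoeff f c n = taylorCoeff g c n :=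
  congrArg (· / (n.factorial : ℂ)) (hfg.iteratedDeriv_eq n)

lemma taylorCoeff_const_mul (a : ℂ) (f : ℂ → ℂ) (c : ℂ) (n : ℕ) :
    taylorCoeff (fun z => a * f z) c n = a * taylorCoeff f c n := by
  rw [taylorCoeff, taylorCoeff, iteratedDeriv_const_mul_field, mul_div_assoc]

lemma taylorCoeff_exp (n : ℕ) : taylorCoeff exp 0 n = (n.factorial : ℂ)⁻¹ := by
  rw [taylorCoeff, iteratedDeriv_eq_iterate, iter_deriv_exp, exp_zero, one_div]

lemma taylorCoeff_eq_of_hasSum {a : ℕ → ℂ}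
    (ha : ∀ᶠ z in 𝓝 0, HasSum (fun n => a n * z ^ n) (f (c + z))) (n : ℕ) :
    taylorCoeff f c n = a n := by
  have series_a : HasFPowerSeriesAt f (FormalMultilinearSeries.ofScalars ℂ a) c :=
    hasFPowerSeriesAt_iff.2 <| by
      simpa only [FormalMultilinearSeries.coeff_ofScalars, smul_eq_mul, mul_comm] using ha
  have coeff_eq := congrArg (fun p => p.coeff n)
    (series_a.analyticAt.hasFPowerSeriesAt.eq_formalMultilinearSeries series_a)
  simpa only [FormalMultilinearSeries.coeff_ofScalars, taylorCoeff] using coeff_eq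

lemma eventually_hasSum_taylorCoeff (hf : AnalyticAt ℂ f c) :
    ∀ᶠ z in 𝓝 0, HasSum (fun n => taylorCoeff f c n * z ^ n) (f (c + z)) := by
  simpa only [FormalMultilinearSeries.coeff_ofScalars, smul_eq_mul, mul_comm, taylorCoeff]
    using hasFPowerSeriesAt_iff.1 hf.hasFPowerSeriesAt

end TaylorCoeff

section Caratheodory

variable {c : ℂ} {R : ℝ} {n : ℕ}

lemma norm_circleAverage_le {f : ℂ → ℂ} :
    ‖Real.circleAverage f c R‖ ≤ Real.circleAverage (fun z => ‖f z‖) c R := by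
  have hpi : 0 ≤ 2 * Real.pi := by positivity
  rw [Real.circleAverage_def, Real.circleAverage_def, norm_smul, Real.norm_eq_abs,
    abs_of_nonneg (inv_nonneg.2 hpi), smul_eq_mul]
  gcongr
  exact intervalIntegral.norm_integral_le_integral_norm hpi

lemma circleAverage_inv_pow_mul {p : ℂ → ℂ} (hR : 0 < R) (hp : DiffContOnCl ℂ p (ball c R)) :
    Real.circleAverage (fun z => ((z - c) ^ n)⁻¹ * p z) c R = taylorCoeff p c n := by
  have kernel_eq (z : ℂ) :
      (z - c)⁻¹ • (((z - c) ^ n)⁻¹ * p z) = (1 / (z - c) ^ (n + 1)) • p z := by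
    rw [smul_eq_mul, smul_eq_mul, ← mul_assoc, ← mul_inv, ← pow_succ', one_div]
  simp_rw [Real.circleAverage_eq_circleIntegral hR.ne', kernel_eq,
    hp.circleIntegral_one_div_sub_center_pow_smul hR n, smul_eq_mul, taylorCoeff]
  field_simp [two_pi_I_ne_zero]

lemma inv_eq_conj_div_norm_sq (w : ℂ) : w⁻¹ = conj w / (‖w‖ : ℂ) ^ 2 := by
  rw [inv_def, normSq_eq_norm_sq, ofReal_inv, ofReal_pow, div_eq_mul_inv]

lemma circleAverage_inv_pow_mul_conj {p : ℂ → ℂ} (hR : 0 < R) (hn : n ≠ 0)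
    (hp : DiffContOnCl ℂ p (ball c R)) :
    Real.circleAverage (fun z => ((z - c) ^ n)⁻¹ * conj (p z)) c R = 0 := by
  have hq : DiffContOnCl ℂ (fun z => (z - c) ^ n * p z) (ball c |R|) := by
    rw [abs_of_pos hR]
    have hpow : Differentiable ℂ fun z : ℂ => (z - c) ^ n := by fun_prop
    exact hpow.diffContOnCl.smul hp
  have hq_int : CircleIntegrable (fun z => (z - c) ^ n * p z) c R :=
    (hq.continuousOn_ball.mono sphere_subset_closedBall).circleIntegrable'
  have on_sphere : EqOn (fun z => ((z - c) ^ n)⁻¹ * conj (p z))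
      (fun z => ((R : ℂ) ^ (2 * n))⁻¹ • conjCLE ((z - c) ^ n * p z)) (sphere c |R|) := by
    intro z hz
    have hzR : ‖z - c‖ = R := by rwa [mem_sphere_iff_norm, abs_of_pos hR] at hz
    simp only [inv_eq_conj_div_norm_sq ((z - c) ^ n), norm_pow, hzR, conjCLE_apply, map_mul,
      smul_eq_mul, ofReal_pow]
    ring
  have average_conj : Real.circleAverage (fun z => conjCLE ((z - c) ^ n * p z)) c R = 0 :=
    calc _ = conjCLE (Real.circleAverage (fun z => (z - c) ^ n * p z) c R) :=
          (conjCLE : ℂ →L[ℝ] ℂ).circleAverage_comp_comm hq_int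
      _ = 0 := by rw [hq.circleAverage, sub_self, zero_pow hn, zero_mul, map_zero]
  rw [Real.circleAverage_congr_sphere on_sphere, Real.circleAverage_fun_smul, average_conj,
    smul_zero]

-- On the circle `(z - c) ^ (-n)` is a multiple of `conj ((z - c) ^ n)`, so `conj p` does not
-- contribute to the `n`-th coefficient and `p` may be replaced by the real function `p + conj p`.
lemma circleAverage_inv_pow_mul_re {p : ℂ → ℂ} (hR : 0 < R) (hn : n ≠ 0)
    (hp : DiffContOnCl ℂ p (ball c R)) :
    Real.circleAverage (fun z => ((z - c) ^ n)⁻¹ * (2 * (p z).re : ℝ)) c R =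
      taylorCoeff p c n := by
  have hp_cont : ContinuousOn p (sphere c |R|) := by
    rw [abs_of_pos hR]
    exact hp.continuousOn_ball.mono sphere_subset_closedBall
  have kernel_cont : ContinuousOn (fun z => ((z - c) ^ n)⁻¹) (sphere c |R|) := by
    refine ContinuousOn.inv₀ (by fun_prop) fun z hz => pow_ne_zero n (sub_ne_zero.2 ?_)
    exact ne_of_mem_sphere hz (abs_ne_zero.2 hR.ne')
  have hp_int : CircleIntegrable (fun z => ((z - c) ^ n)⁻¹ * p z) c R :=
    (kernel_cont.mul hp_cont).circleIntegrable'
  have hconj_int : CircleIntegrable (fun z => ((z - c) ^ n)⁻¹ * conj (p z)) c R :=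
    (kernel_cont.mul (continuous_conj.comp_continuousOn hp_cont)).circleIntegrable'
  simp_rw [← add_conj, mul_add]
  rw [Real.circleAverage_fun_add hp_int hconj_int, circleAverage_inv_pow_mul hR hp,
    circleAverage_inv_pow_mul_conj hR hn hp, add_zero]

lemma norm_taylorCoeff_mul_pow_le_of_diffContOnCl {p : ℂ → ℂ} (hR : 0 < R) (hn : n ≠ 0)
    (hp : DiffContOnCl ℂ p (ball c R)) (hre : ∀ z ∈ sphere c R, 0 ≤ (p z).re) :
    ‖taylorCoeff p c n‖ * R ^ n ≤ 2 * (p c).re := by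
  have hp_abs : DiffContOnCl ℂ p (ball c |R|) := by rwa [abs_of_pos hR]
  have hp_int : CircleIntegrable p c R :=
    (hp_abs.continuousOn_ball.mono sphere_subset_closedBall).circleIntegrable'
  have norm_on_sphere : EqOn (fun z => ‖((z - c) ^ n)⁻¹ * (2 * (p z).re : ℝ)‖)
      (fun z => (2 / R ^ n) • reCLM (p z)) (sphere c |R|) := by
    intro z hz
    rw [abs_of_pos hR] at hz
    have hzR : ‖z - c‖ = R := mem_sphere_iff_norm.1 hz
    simp only [norm_mul, norm_inv, norm_pow, hzR, norm_real, Real.norm_eq_abs, abs_two,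
      abs_of_nonneg (hre z hz), smul_eq_mul, reCLM_apply]
    ring
  have average_re : Real.circleAverage (fun z => reCLM (p z)) c R = (p c).re :=
    (reCLM.circleAverage_comp_comm hp_int).trans (congrArg re hp_abs.circleAverage)
  rw [← le_div_iff₀ (pow_pos hR n)]
  calc ‖taylorCoeff p c n‖
      ≤ Real.circleAverage (fun z => ‖((z - c) ^ n)⁻¹ * (2 * (p z).re : ℝ)‖) c R := by
        rw [← circleAverage_inv_pow_mul_re hR hn hp]
        exact norm_circleAverage_le
    _ = 2 * (p c).re / R ^ n := by
        rw [Real.circleAverage_congr_sphere norm_on_sphere, Real.circleAverage_fun_smul,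
          average_re, smul_eq_mul, div_mul_eq_mul_div]

theorem norm_taylorCoeff_mul_pow_le_of_re_nonneg {p : ℂ → ℂ} (hR : 0 < R) (hn : n ≠ 0)
    (hp : DifferentiableOn ℂ p (ball c R)) (hre : ∀ z ∈ ball c R, 0 ≤ (p z).re) :
    ‖taylorCoeff p c n‖ * R ^ n ≤ 2 * (p c).re := by
  have tendsto_radius : Filter.Tendsto (fun ρ : ℝ => ‖taylorCoeff p c n‖ * ρ ^ n) (𝓝[<] R)
      (𝓝 (‖taylorCoeff p c n‖ * R ^ n)) :=
    (Continuous.tendsto (by fun_prop) R).mono_left nhdsWithin_le_nhds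
  refine le_of_tendsto tendsto_radius ?_
  filter_upwards [Ioo_mem_nhdsLT hR] with ρ hρ
  have hsub : closedBall c ρ ⊆ ball c R := closedBall_subset_ball hρ.2
  exact norm_taylorCoeff_mul_pow_le_of_diffContOnCl hρ.1 hn (hp.diffContOnCl_ball hsub)
    fun z hz => hre z (hsub (sphere_subset_closedBall hz))

theorem norm_taylorCoeff_mul_pow_le_of_norm_le {χ : ℂ → ℂ} {M : ℝ} (hR : 0 < R) (hn : n ≠ 0)
    (hχ : DifferentiableOn ℂ χ (ball c R)) (hM : ∀ z ∈ ball c R, ‖χ z‖ ≤ M) :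
    ‖taylorCoeff χ c n‖ * R ^ n ≤ 2 * (M - ‖χ c‖) := by
  obtain ⟨α, hα, hαc⟩ := exists_norm_eq_mul_self (χ c)
  have hre : ∀ z ∈ ball c R, 0 ≤ (M - α * χ z).re := by
    intro z hz
    have hle : (α * χ z).re ≤ ‖χ z‖ := (re_le_norm _).trans_eq (by rw [norm_mul, hα, one_mul])
    rw [sub_re, ofReal_re, sub_nonneg]
    exact hle.trans (hM z hz)
  have hcoeff : taylorCoeff (fun z => M - α * χ z) c n = -(α * taylorCoeff χ c n) := by
    rw [← taylorCoeff_const_mul, taylorCoeff, iteratedDeriv_const_sub (Nat.pos_of_ne_zero hn),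
      iteratedDeriv_neg, neg_div, taylorCoeff]
  have hbound := norm_taylorCoeff_mul_pow_le_of_re_nonneg hR hn (by fun_prop) hre
  rwa [hcoeff, norm_neg, norm_mul, hα, one_mul, ← hαc, ← ofReal_sub, ofReal_re] at hbound

end Caratheodory

/-- The majorant series `∑ |aₙ| r ^ n` of `f = ∑ aₙ z ^ n` at the origin. Its values lie in
`[0, ∞]`, so that a bound by a finite number includes convergence. -/
def majorantSeries (f : ℂ → ℂ) (r : ℝ≥0) : ℝ≥0∞ :=
  ∑' n, ‖taylorCoeff f 0 n‖ₑ * (r : ℝ≥0∞) ^ n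

lemma enorm_mul_coe_pow (a : ℂ) (r : ℝ≥0) (n : ℕ) :
    ‖a‖ₑ * (r : ℝ≥0∞) ^ n = ENNReal.ofReal (‖a‖ * (r : ℝ) ^ n) := by
  rw [ENNReal.ofReal_mul (norm_nonneg a), ofReal_norm, ENNReal.ofReal_pow r.coe_nonneg,
    ENNReal.ofReal_coe_nnreal]

section MajorantSeries

variable {f g : ℂ → ℂ} {r : ℝ≥0}

lemma majorantSeries_congr (hfg : f =ᶠ[𝓝 0] g) : majorantSeries f r = majorantSeries g r := by
  simp_rw [majorantSeries, taylorCoeff_congr hfg]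

lemma majorantSeries_eq_of_hasSum {a : ℕ → ℂ}
    (ha : ∀ᶠ z in 𝓝 0, HasSum (fun n => a n * z ^ n) (f z)) :
    majorantSeries f r = ∑' n, ‖a n‖ₑ * (r : ℝ≥0∞) ^ n := by
  simp_rw [majorantSeries, taylorCoeff_eq_of_hasSum (c := 0) (by simpa only [zero_add] using ha)]

lemma majorantSeries_id_mul (hg : AnalyticAt ℂ g 0) :
    majorantSeries (fun z => z * g z) r = r * majorantSeries g r := by
  have hasSum_id_mul : ∀ᶠ z in 𝓝 0,
      HasSum (fun n => Nat.casesOn n 0 (taylorCoeff g 0) * z ^ n) (z * g z) := by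
    filter_upwards [eventually_hasSum_taylorCoeff hg] with z hz
    rw [zero_add] at hz
    rw [← hasSum_nat_add_iff' 1]
    simpa [pow_succ', mul_left_comm] using hz.mul_left z
  rw [majorantSeries_eq_of_hasSum hasSum_id_mul, tsum_eq_zero_add' ENNReal.summable,
    majorantSeries, ← ENNReal.tsum_mul_left]
  simp [pow_succ', mul_left_comm]

lemma majorantSeries_pow_mul (hg : AnalyticAt ℂ g 0) (j : ℕ) :
    majorantSeries (fun z => z ^ j * g z) r = (r : ℝ≥0∞) ^ j * majorantSeries g r := by
  induction j with
  | zero => simp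
  | succ j ih =>
    simp_rw [pow_succ', mul_assoc]
    rw [majorantSeries_id_mul (by fun_prop), ih]

lemma majorantSeries_exp (r : ℝ≥0) : majorantSeries exp r = ENNReal.ofReal (Real.exp r) := by
  have hasSum_exp : HasSum (fun n : ℕ => (r : ℝ) ^ n / n.factorial) (Real.exp r) := by
    simpa only [Real.exp_eq_exp_ℝ] using NormedSpace.expSeries_div_hasSum_exp (r : ℝ)
  rw [← hasSum_exp.tsum_eq,
    ENNReal.ofReal_tsum_of_nonneg (fun n => by positivity) hasSum_exp.summable]
  refine tsum_congr fun n => ?_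
  rw [enorm_mul_coe_pow, taylorCoeff_exp, norm_inv, norm_natCast, div_eq_inv_mul]

lemma summable_and_tsum_le_of_tsum_enorm_le {a : ℕ → ℂ} {B : ℝ} (hB : 0 ≤ B)
    (h : ∑' n, ‖a n‖ₑ * (r : ℝ≥0∞) ^ n ≤ ENNReal.ofReal B) :
    Summable (fun n => ‖a n‖ * (r : ℝ) ^ n) ∧ ∑' n, ‖a n‖ * (r : ℝ) ^ n ≤ B := by
  simp_rw [enorm_mul_coe_pow] at h
  have hnonneg (n : ℕ) : 0 ≤ ‖a n‖ * (r : ℝ) ^ n := by positivity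
  have hsum : Summable (fun n => ‖a n‖ * (r : ℝ) ^ n) := by
    have := ENNReal.summable_toReal (h.trans_lt ENNReal.ofReal_lt_top).ne
    simpa only [ENNReal.toReal_ofReal (hnonneg _)] using this
  rw [← ENNReal.ofReal_tsum_of_nonneg hnonneg hsum] at h
  exact ⟨hsum, (ENNReal.ofReal_le_ofReal_iff hB).1 h⟩

end MajorantSeries

-- Each coefficient of positive index costs at most `2 (M - ‖χ 0‖)`, and `2 ∑ₙ 3 ^ (-n-1) = 1`.
theorem majorantSeries_le_of_norm_le {χ : ℂ → ℂ} {M R : ℝ} {r : ℝ≥0} (hR : 0 < R)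
    (hχ : DifferentiableOn ℂ χ (ball 0 R)) (hM : ∀ z ∈ ball 0 R, ‖χ z‖ ≤ M) (hr : 3 * r ≤ R) :
    majorantSeries χ r ≤ ENNReal.ofReal M := by
  have h0 : 0 ≤ M - ‖χ 0‖ := sub_nonneg.2 (hM 0 (mem_ball_self hR))
  have tail_term_le (n : ℕ) : ‖taylorCoeff χ 0 (n + 1)‖ₑ * (r : ℝ≥0∞) ^ (n + 1) ≤
      ENNReal.ofReal (2 / 3 * (M - ‖χ 0‖) * (1 / 3) ^ n) := by
    rw [enorm_mul_coe_pow]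
    refine ENNReal.ofReal_le_ofReal ?_
    calc ‖taylorCoeff χ 0 (n + 1)‖ * (r : ℝ) ^ (n + 1)
        ≤ ‖taylorCoeff χ 0 (n + 1)‖ * (R / 3) ^ (n + 1) := by gcongr; linarith
      _ = ‖taylorCoeff χ 0 (n + 1)‖ * R ^ (n + 1) * (1 / 3) ^ (n + 1) := by
        rw [div_eq_mul_one_div, mul_pow, mul_assoc]
      _ ≤ 2 * (M - ‖χ 0‖) * (1 / 3) ^ (n + 1) := by
        gcongr ?_ * _
        exact norm_taylorCoeff_mul_pow_le_of_norm_le hR n.succ_ne_zero hχ hM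
      _ = 2 / 3 * (M - ‖χ 0‖) * (1 / 3) ^ n := by ring
  have hgeom : HasSum (fun n : ℕ => 2 / 3 * (M - ‖χ 0‖) * (1 / 3) ^ n) (M - ‖χ 0‖) := by
    have value_eq : 2 / 3 * (M - ‖χ 0‖) * (1 - 1 / 3)⁻¹ = M - ‖χ 0‖ := by ring
    simpa only [value_eq] using
      (hasSum_geometric_of_lt_one (r := (1 / 3 : ℝ)) (by norm_num) (by norm_num)).mul_left
        (2 / 3 * (M - ‖χ 0‖))
  calc majorantSeries χ r
      = ‖χ 0‖ₑ + ∑' n, ‖taylorCoeff χ 0 (n + 1)‖ₑ * (r : ℝ≥0∞) ^ (n + 1) := by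
        rw [majorantSeries, tsum_eq_zero_add' ENNReal.summable, pow_zero, mul_one, taylorCoeff_zero]
    _ ≤ ‖χ 0‖ₑ + ∑' n : ℕ, ENNReal.ofReal (2 / 3 * (M - ‖χ 0‖) * (1 / 3) ^ n) := by
        gcongr with n
        exact tail_term_le n
    _ = ENNReal.ofReal M := by
        rw [← ENNReal.ofReal_tsum_of_nonneg (fun n => by positivity) hgeom.summable,
          hgeom.tsum_eq, ← ofReal_norm, ← ENNReal.ofReal_add (norm_nonneg _) h0,
          add_sub_cancel]

section Composition

variable {f F ω : ℂ → ℂ} {U : Set ℂ}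

lemma tendstoLocallyUniformlyOn_iteratedDeriv {ι : Type*} {φ : Filter ι} {G : ι → ℂ → ℂ}
    (hG : TendstoLocallyUniformlyOn G f φ U) (hdiff : ∀ᶠ i in φ, DifferentiableOn ℂ (G i) U)
    (hU : IsOpen U) (n : ℕ) :
    TendstoLocallyUniformlyOn (fun i => iteratedDeriv n (G i)) (iteratedDeriv n f) φ U := by
  induction n with
  | zero => simpa only [iteratedDeriv_zero] using hG
  | succ n ih =>
    simp only [iteratedDeriv_succ]
    refine ih.deriv ?_ hU
    filter_upwards [hdiff] with i hi
    rw [iteratedDeriv_eq_iterate]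
    exact ((hi.analyticOnNhd hU).iterated_deriv n).differentiableOn

lemma hasSum_taylorCoeff_tsum {ι : Type*} {G : ι → ℂ → ℂ} {u : ι → ℝ} {c : ℂ}
    (hu : Summable u) (hU : IsOpen U) (hc : c ∈ U) (hG : ∀ i, DifferentiableOn ℂ (G i) U)
    (hGu : ∀ i, ∀ z ∈ U, ‖G i z‖ ≤ u i) (n : ℕ) :
    HasSum (fun i => taylorCoeff (G i) c n) (taylorCoeff (fun z => ∑' i, G i z) c n) := by
  have hlim := tendstoLocallyUniformlyOn_iteratedDeriv
    (tendstoUniformlyOn_tsum hu hGu).tendstoLocallyUniformlyOn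
    (.of_forall fun s => DifferentiableOn.fun_sum fun i _ => hG i) hU n
  refine HasSum.div_const ?_ _
  refine (hlim.tendsto_at hc).congr fun s => ?_
  exact iteratedDeriv_fun_sum fun i _ => (hG i).analyticAt (hU.mem_nhds hc) |>.contDiffAt

lemma exists_summable_norm_taylorCoeff_mul_pow {c : ℂ} (hF : AnalyticAt ℂ F c) :
    ∃ s > 0, Summable fun j => ‖taylorCoeff F c j‖ * s ^ j := by
  obtain ⟨ε, hε, hsum⟩ := eventually_nhds_iff_ball.1 (eventually_hasSum_taylorCoeff hF)
  refine ⟨ε / 2, half_pos hε, ?_⟩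
  have hmem : ((ε / 2 : ℝ) : ℂ) ∈ ball 0 ε := by
    rw [mem_ball_zero_iff, norm_real, Real.norm_of_nonneg (half_pos hε).le]
    exact half_lt_self hε
  simpa only [norm_mul, norm_pow, norm_real, Real.norm_of_nonneg (half_pos hε).le]
    using (hsum _ hmem).summable.norm

lemma hasSum_taylorCoeff_comp (hF : AnalyticAt ℂ F 0) (hω : AnalyticAt ℂ ω 0) (hω0 : ω 0 = 0)
    (n : ℕ) :
    HasSum (fun j => taylorCoeff F 0 j * taylorCoeff (fun z => ω z ^ j) 0 n)
      (taylorCoeff (fun z => F (ω z)) 0 n) := by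
  obtain ⟨s, hs, hsummable⟩ := exists_summable_norm_taylorCoeff_mul_pow hF
  have hω_lim : Filter.Tendsto ω (𝓝 0) (𝓝 0) := by simpa only [hω0] using hω.continuousAt.tendsto
  have hω_small : ∀ᶠ z in 𝓝 0, ‖ω z‖ < s :=
    hω_lim.norm.eventually_lt_const (by rwa [norm_zero])
  obtain ⟨ε, hε, hball⟩ := eventually_nhds_iff_ball.1 (hω.eventually_analyticAt.and hω_small)
  have hterm_diff (j : ℕ) :
      DifferentiableOn ℂ (fun z => taylorCoeff F 0 j * ω z ^ j) (ball 0 ε) := fun z hz =>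
    (((hball z hz).1.differentiableAt.pow j).const_mul _).differentiableWithinAt
  have hterm_le (j : ℕ) (z : ℂ) (hz : z ∈ ball 0 ε) :
      ‖taylorCoeff F 0 j * ω z ^ j‖ ≤ ‖taylorCoeff F 0 j‖ * s ^ j := by
    rw [norm_mul, norm_pow]
    gcongr
    exact (hball z hz).2.le
  have hcomp : (fun z => F (ω z)) =ᶠ[𝓝 0] fun z => ∑' j, taylorCoeff F 0 j * ω z ^ j := by
    filter_upwards [hω_lim.eventually (eventually_hasSum_taylorCoeff hF)] with z hz
    rw [hz.tsum_eq, zero_add]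
  rw [taylorCoeff_congr hcomp]
  convert hasSum_taylorCoeff_tsum hsummable isOpen_ball (mem_ball_self hε) hterm_diff hterm_le n
    using 2 with j
  exact (taylorCoeff_const_mul _ _ _ _).symm

lemma majorantSeries_pow_le {R : ℝ} {ρ r : ℝ≥0} (hω : DifferentiableOn ℂ ω (ball 0 R))
    (hR : 0 < R) (hωρ : ∀ z ∈ ball 0 R, ‖ω z‖ ≤ ρ * ‖z‖) (hr : 3 * r ≤ R) (j : ℕ) :
    majorantSeries (fun z => ω z ^ j) r ≤ ((ρ * r : ℝ≥0) : ℝ≥0∞) ^ j := by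
  have hnhds : ball (0 : ℂ) R ∈ 𝓝 0 := ball_mem_nhds 0 hR
  have hω0 : ω 0 = 0 := by simpa using hωρ 0 (mem_ball_self hR)
  have hω_maps : MapsTo ω (ball 0 R) (closedBall (ω 0) (ρ * R)) := by
    intro z hz
    rw [hω0, mem_closedBall_zero_iff]
    refine (hωρ z hz).trans ?_
    gcongr
    exact (mem_ball_zero_iff.1 hz).le
  have hω_eq : (fun z => ω z ^ j) = fun z => z ^ j * dslope ω 0 z ^ j := by
    funext z
    have hdslope : z * dslope ω 0 z = ω z := by
      simpa only [sub_zero, smul_eq_mul, hω0] using sub_smul_dslope ω 0 z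
    rw [← mul_pow, hdslope]
  have hφ_diff : DifferentiableOn ℂ (fun z => dslope ω 0 z ^ j) (ball 0 R) :=
    ((differentiableOn_dslope hnhds).2 hω).pow j
  have hφ_le : ∀ z ∈ ball 0 R, ‖dslope ω 0 z ^ j‖ ≤ (ρ : ℝ) ^ j := by
    intro z hz
    rw [norm_pow]
    gcongr
    simpa only [mul_div_cancel_right₀ _ hR.ne']
      using norm_dslope_le_div_of_mapsTo_ball hω hω_maps hz
  calc majorantSeries (fun z => ω z ^ j) r
      = (r : ℝ≥0∞) ^ j * majorantSeries (fun z => dslope ω 0 z ^ j) r := by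
        rw [hω_eq, majorantSeries_pow_mul (hφ_diff.analyticAt hnhds)]
    _ ≤ (r : ℝ≥0∞) ^ j * ENNReal.ofReal ((ρ : ℝ) ^ j) := by
        gcongr
        exact majorantSeries_le_of_norm_le hR hφ_diff hφ_le hr
    _ = ((ρ * r : ℝ≥0) : ℝ≥0∞) ^ j := by
        rw [ENNReal.ofReal_pow ρ.coe_nonneg, ENNReal.ofReal_coe_nnreal, ← mul_pow, mul_comm,
          ENNReal.coe_mul]

theorem majorantSeries_comp_le {R : ℝ} {ρ r : ℝ≥0} (hF : AnalyticAt ℂ F 0)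
    (hω : DifferentiableOn ℂ ω (ball 0 R)) (hR : 0 < R)
    (hωρ : ∀ z ∈ ball 0 R, ‖ω z‖ ≤ ρ * ‖z‖) (hr : 3 * r ≤ R) :
    majorantSeries (fun z => F (ω z)) r ≤ majorantSeries F (ρ * r) := by
  have hω0 : ω 0 = 0 := by simpa using hωρ 0 (mem_ball_self hR)
  have hω_an : AnalyticAt ℂ ω 0 := hω.analyticAt (ball_mem_nhds 0 hR)
  calc majorantSeries (fun z => F (ω z)) r
      ≤ ∑' n, ∑' j, ‖taylorCoeff F 0 j‖ₑ *
          (‖taylorCoeff (fun z => ω z ^ j) 0 n‖ₑ * (r : ℝ≥0∞) ^ n) := by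
        refine ENNReal.tsum_le_tsum fun n => ?_
        rw [← (hasSum_taylorCoeff_comp hF hω_an hω0 n).tsum_eq]
        simp_rw [← mul_assoc, ENNReal.tsum_mul_right, ← enorm_mul]
        gcongr
        exact enorm_tsum_le_tsum_enorm
    _ = ∑' j, ‖taylorCoeff F 0 j‖ₑ * majorantSeries (fun z => ω z ^ j) r := by
        rw [ENNReal.tsum_comm]
        simp_rw [ENNReal.tsum_mul_left, majorantSeries]
    _ ≤ majorantSeries F (ρ * r) := by
        refine ENNReal.tsum_le_tsum fun j => ?_
        gcongr
        exact majorantSeries_pow_le hω hR hωρ hr j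

end Composition

section Logarithm

variable {c : ℂ} {R : ℝ}

lemma exists_differentiableOn_exp_eq {q : ℂ → ℂ} (hq : DifferentiableOn ℂ q (ball c R))
    (hq0 : ∀ z ∈ ball c R, q z ≠ 0) :
    ∃ h : ℂ → ℂ, DifferentiableOn ℂ h (ball c R) ∧ h c = log (q c) ∧
      ∀ z ∈ ball c R, exp (h z) = q z := by
  have hlogDeriv : DifferentiableOn ℂ (fun z => deriv q z / q z) (ball c R) :=
    (hq.deriv isOpen_ball).div hq hq0
  obtain ⟨h, hc, hderiv⟩ := hlogDeriv.isExactOn_ball.with_val_at c (log (q c))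
  refine ⟨h, fun z hz => (hderiv z hz).differentiableAt.differentiableWithinAt, hc,
    fun z hz => ?_⟩
  have hquot : ∀ w ∈ ball c R, HasDerivAt (fun w => exp (h w) / q w) 0 w := by
    intro w hw
    have hqw := (hq.differentiableAt (isOpen_ball.mem_nhds hw)).hasDerivAt
    simpa only [mul_assoc, div_mul_cancel₀ _ (hq0 w hw), sub_self, zero_div]
      using (hderiv w hw).cexp.fun_div hqw (hq0 w hw)
  have hcR : c ∈ ball c R := mem_ball_self (pos_of_mem_ball hz)
  have hconst : exp (h z) / q z = exp (h c) / q c :=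
    isOpen_ball.is_const_of_deriv_eq_zero (convex_ball c R).isPreconnected
      (fun w hw => (hquot w hw).differentiableAt.differentiableWithinAt)
      (fun w hw => (hquot w hw).deriv) hz hcR
  rwa [hc, exp_log (hq0 c hcR), div_self (hq0 c hcR), div_eq_one_iff_eq (hq0 z hz)] at hconst

lemma norm_le_div_of_norm_mul_le {u : ℂ → ℂ} {C : ℝ} (hu : DifferentiableOn ℂ u (ball 0 R))
    (huC : ∀ z ∈ ball 0 R, ‖z * u z‖ ≤ C) {z : ℂ} (hz : z ∈ ball 0 R) : ‖u z‖ ≤ C / R := by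
  have hmaps : MapsTo (fun z => z * u z) (ball 0 R) (closedBall (0 * u 0) C) := by
    intro w hw
    rw [zero_mul, mem_closedBall_zero_iff]
    exact huC w hw
  have hdslope : dslope (fun z => z * u z) 0 z = u z := by
    rcases eq_or_ne z 0 with rfl | hz0
    · have hu0 := (hu.differentiableAt (isOpen_ball.mem_nhds hz)).hasDerivAt
      simpa using ((hasDerivAt_id (0 : ℂ)).fun_mul hu0).deriv
    · rw [dslope_of_ne _ hz0, slope_def_field, zero_mul, sub_zero, sub_zero,
        mul_div_cancel_left₀ _ hz0]
  rw [← hdslope]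
  exact norm_dslope_le_div_of_mapsTo_ball (differentiableOn_id.mul hu) hmaps hz

end Logarithm

section Frontier

lemma le_infDist_frontier_of_ball_subset {X : Type*} [PseudoMetricSpace X] {s : Set X} {x : X}
    {d : ℝ} (hs : (frontier s).Nonempty) (hball : ball x d ⊆ s) : d ≤ infDist x (frontier s) := by
  refine (le_infDist hs).2 fun y hy => le_of_not_gt fun hlt => hy.2 ?_
  exact interior_maximal hball isOpen_ball (mem_ball'.2 hlt)

lemma frontier_nonempty_of_isBounded {E : Type*} [NormedAddCommGroup E] [NormedSpace ℝ E]
    [Nontrivial E] {s : Set E} (hne : s.Nonempty) (hs : Bornology.IsBounded s) :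
    (frontier s).Nonempty :=
  nonempty_frontier_iff.2 ⟨hne, fun h => NormedSpace.unbounded_univ ℝ E (h ▸ hs)⟩

lemma isOpen_image_ball_of_le_norm {f : ℂ → ℂ} {m R : ℝ} (hR : 0 < R)
    (hf : DifferentiableOn ℂ f (ball 0 R)) (hf0 : f 0 = 0) (hm : 0 < m)
    (hfm : ∀ z ∈ ball 0 R, m * ‖z‖ ≤ ‖f z‖) : IsOpen (f '' ball 0 R) := by
  rcases (hf.analyticOnNhd isOpen_ball).is_constant_or_isOpen
    (convex_ball 0 R).isPreconnected with ⟨w, hw⟩ | hopen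
  · have hmem : ((R / 2 : ℝ) : ℂ) ∈ ball 0 R := by
      rw [mem_ball_zero_iff, norm_real, Real.norm_of_nonneg (half_pos hR).le]
      exact half_lt_self hR
    have hle := hfm _ hmem
    rw [hw _ hmem, ← hw 0 (mem_ball_self hR), hf0, norm_zero, norm_real,
      Real.norm_of_nonneg (half_pos hR).le] at hle
    exact absurd hle (mul_pos hm (half_pos hR)).not_ge
  · exact hopen _ subset_rfl isOpen_ball

-- The image is open, and in `ball 0 (m * R)` it is also closed, because only points of
-- `closedBall 0 ρ` are mapped into `ball 0 (m * ρ)`.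
theorem ball_subset_image_ball_of_le_norm {f : ℂ → ℂ} {m R : ℝ} (hR : 0 < R)
    (hf : DifferentiableOn ℂ f (ball 0 R)) (hf0 : f 0 = 0) (hm : 0 < m)
    (hfm : ∀ z ∈ ball 0 R, m * ‖z‖ ≤ ‖f z‖) : ball 0 (m * R) ⊆ f '' ball 0 R := by
  have hzero : (0 : ℂ) ∈ ball 0 (m * R) ∩ f '' ball 0 R :=
    ⟨mem_ball_self (mul_pos hm hR), 0, mem_ball_self hR, hf0⟩
  refine (convex_ball 0 (m * R)).isPreconnected.subset_of_closure_inter_subset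
    (isOpen_image_ball_of_le_norm hR hf hf0 hm hfm) ⟨0, hzero⟩ ?_
  rintro w ⟨hw_closure, hw⟩
  obtain ⟨ρ, hwρ, hρR⟩ : ∃ ρ, ‖w‖ / m < ρ ∧ ρ < R :=
    exists_between ((div_lt_iff₀' hm).2 (mem_ball_zero_iff.1 hw))
  have hsub : closedBall 0 ρ ⊆ ball (0 : ℂ) R := closedBall_subset_ball hρR
  have himage : ball 0 (m * ρ) ∩ f '' ball 0 R ⊆ f '' closedBall 0 ρ := by
    rintro _ ⟨hfz, z, hz, rfl⟩
    refine mem_image_of_mem f (mem_closedBall_zero_iff.2 ?_)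
    exact le_of_mul_le_mul_left ((hfm z hz).trans (mem_ball_zero_iff.1 hfz).le) hm
  have hclosed : IsClosed (f '' closedBall 0 ρ) :=
    ((isCompact_closedBall 0 ρ).image_of_continuousOn (hf.continuousOn.mono hsub)).isClosed
  have hw_ball : w ∈ ball 0 (m * ρ) := mem_ball_zero_iff.2 ((div_lt_iff₀' hm).1 hwρ)
  exact image_mono hsub
    (closure_minimal himage hclosed (isOpen_ball.inter_closure ⟨hw_ball, hw_closure⟩))

end Frontier

lemma Subordinate.majorantSeries_le {g F : ℂ → ℂ} {r : ℝ≥0} (hgF : Subordinate g F)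
    (hF : AnalyticAt ℂ F 0) (hr : 3 * (r : ℝ) ≤ 1) : majorantSeries g r ≤ majorantSeries F r := by
  obtain ⟨ω, hω, hω0, hω_maps, hg⟩ := hgF
  have schwarz : ∀ z ∈ ball (0 : ℂ) 1, ‖ω z‖ ≤ (1 : ℝ≥0) * ‖z‖ := fun z hz => by
    rw [NNReal.coe_one, one_mul]
    exact norm_le_norm_of_mapsTo_ball hω (fun w hw => ball_subset_closedBall (hω_maps w hw)) hω0
      (mem_ball_zero_iff.1 hz)
  have hgω : g =ᶠ[𝓝 0] fun z => F (ω z) := by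
    filter_upwards [ball_mem_nhds (0 : ℂ) one_pos] with z hz using hg z hz
  rw [majorantSeries_congr hgω]
  simpa only [one_mul] using majorantSeries_comp_le hF hω one_pos schwarz hr

lemma mul_deriv_div_of_eq_mul_exp {f h : ℂ → ℂ} {z : ℂ} (hz : z ≠ 0) (hh : DifferentiableAt ℂ h z)
    (hf : f =ᶠ[𝓝 z] fun w => w * exp (h w)) : z * deriv f z / f z = 1 + z * deriv h z := by
  have hderiv : deriv f z = 1 * exp (h z) + z * (exp (h z) * deriv h z) := by
    rw [hf.deriv_eq]
    exact ((hasDerivAt_id z).fun_mul hh.hasDerivAt.cexp).deriv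
  rw [hderiv, hf.eq_of_nhds]
  field_simp [exp_ne_zero]

namespace IsClassA

variable {f : ℂ → ℂ} {D : ℝ≥0}

lemma analyticAt_zero (hf : IsClassA f) : AnalyticAt ℂ f 0 :=
  hf.1.analyticAt (ball_mem_nhds 0 one_pos)

lemma exists_eq_mul_exp (hf : IsClassA f) (hf_ne : ∀ z ∈ 𝔻, z ≠ 0 → f z ≠ 0) :
    ∃ h : ℂ → ℂ, DifferentiableOn ℂ h 𝔻 ∧ h 0 = 0 ∧ ∀ z ∈ 𝔻, f z = z * exp (h z) := by
  obtain ⟨hf_diff, hf0, hf1⟩ := hf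
  have hf_eq (z : ℂ) : f z = z * dslope f 0 z := by
    simpa [hf0] using (sub_smul_dslope f 0 z).symm
  have hq0 : dslope f 0 0 = 1 := (dslope_same f 0).trans hf1
  have hq_ne : ∀ z ∈ 𝔻, dslope f 0 z ≠ 0 := by
    intro z hz
    rcases eq_or_ne z 0 with rfl | hz0
    · exact hq0 ▸ one_ne_zero
    · exact right_ne_zero_of_mul (hf_eq z ▸ hf_ne z hz hz0)
  have hq_diff : DifferentiableOn ℂ (dslope f 0) 𝔻 :=
    (differentiableOn_dslope (ball_mem_nhds 0 one_pos)).2 hf_diff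
  obtain ⟨h, hh, hh0, hexp⟩ := exists_differentiableOn_exp_eq hq_diff hq_ne
  exact ⟨h, hh, by rw [hh0, hq0, log_one], fun z hz => by rw [hexp z hz, ← hf_eq z]⟩

-- The bound on `h` comes from `z * h' z = z * f' z / f z - 1` and Schwarz's lemma.
lemma exists_eq_mul_exp_norm_le (hf : IsClassA f)
    (hfD : ∀ z ∈ 𝔻, z ≠ 0 → f z ≠ 0 ∧ ‖z * deriv f z / f z - 1‖ ≤ D) :
    ∃ h : ℂ → ℂ, DifferentiableOn ℂ h 𝔻 ∧ (∀ z ∈ 𝔻, ‖h z‖ ≤ D * ‖z‖) ∧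
      ∀ z ∈ 𝔻, f z = z * exp (h z) := by
  obtain ⟨h, hh, hh0, hf_eq⟩ := hf.exists_eq_mul_exp fun z hz hz0 => (hfD z hz hz0).1
  have hmul_deriv : ∀ z ∈ 𝔻, ‖z * deriv h z‖ ≤ D := by
    intro z hz
    rcases eq_or_ne z 0 with rfl | hz0
    · simp
    have hz_nhds : 𝔻 ∈ 𝓝 z := isOpen_ball.mem_nhds hz
    have hf_nhds : f =ᶠ[𝓝 z] fun w => w * exp (h w) := by
      filter_upwards [hz_nhds] with w hw using hf_eq w hw
    have hbound := (hfD z hz hz0).2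
    rwa [mul_deriv_div_of_eq_mul_exp hz0 (hh.differentiableAt hz_nhds) hf_nhds,
      add_sub_cancel_left] at hbound
  have hderiv : ∀ z ∈ 𝔻, ‖deriv h z‖ ≤ D := fun z hz => by
    simpa only [div_one] using norm_le_div_of_norm_mul_le (hh.deriv isOpen_ball) hmul_deriv hz
  refine ⟨h, hh, fun z hz => ?_, hf_eq⟩
  simpa only [hh0, sub_zero] using (convex_ball (0 : ℂ) 1).norm_image_sub_le_of_norm_deriv_le
    (fun w hw => hh.differentiableAt (isOpen_ball.mem_nhds hw)) hderiv (mem_ball_self one_pos) hz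

lemma majorantSeries_le (hf : IsClassA f)
    (hfD : ∀ z ∈ 𝔻, z ≠ 0 → f z ≠ 0 ∧ ‖z * deriv f z / f z - 1‖ ≤ D) {r : ℝ≥0}
    (hr : 3 * (r : ℝ) ≤ 1) : majorantSeries f r ≤ ENNReal.ofReal (r * Real.exp (D * r)) := by
  obtain ⟨h, hh, hhD, hf_eq⟩ := hf.exists_eq_mul_exp_norm_le hfD
  have hnhds : 𝔻 ∈ 𝓝 0 := ball_mem_nhds 0 one_pos
  have hf_nhds : f =ᶠ[𝓝 0] fun z => z * exp (h z) := by
    filter_upwards [hnhds] with z hz using hf_eq z hz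
  calc majorantSeries f r
      = r * majorantSeries (fun z => exp (h z)) r := by
        rw [majorantSeries_congr hf_nhds, majorantSeries_id_mul (hh.cexp.analyticAt hnhds)]
    _ ≤ r * majorantSeries exp (D * r) := by
        gcongr
        exact majorantSeries_comp_le analyticAt_cexp hh one_pos hhD hr
    _ = ENNReal.ofReal (r * Real.exp (D * r)) := by
        rw [majorantSeries_exp, ENNReal.ofReal_mul r.coe_nonneg, ENNReal.ofReal_coe_nnreal,
          NNReal.coe_mul]

lemma norm_le_and_le_norm (hf : IsClassA f)
    (hfD : ∀ z ∈ 𝔻, z ≠ 0 → f z ≠ 0 ∧ ‖z * deriv f z / f z - 1‖ ≤ D) {z : ℂ} (hz : z ∈ 𝔻) :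
    Real.exp (-D) * ‖z‖ ≤ ‖f z‖ ∧ ‖f z‖ ≤ Real.exp D * ‖z‖ := by
  obtain ⟨h, -, hhD, hf_eq⟩ := hf.exists_eq_mul_exp_norm_le hfD
  have hz1 : ‖z‖ ≤ 1 := (mem_ball_zero_iff.1 hz).le
  have hre : |(h z).re| ≤ D :=
    (abs_re_le_norm _).trans ((hhD z hz).trans (mul_le_of_le_one_right D.coe_nonneg hz1))
  rw [hf_eq z hz, norm_mul, norm_exp, mul_comm ‖z‖]
  constructor
  · gcongr
    exact (abs_le.1 hre).1
  · gcongr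
    exact (abs_le.1 hre).2

lemma exp_neg_le_infDist_frontier (hf : IsClassA f)
    (hfD : ∀ z ∈ 𝔻, z ≠ 0 → f z ≠ 0 ∧ ‖z * deriv f z / f z - 1‖ ≤ D) :
    Real.exp (-D) ≤ infDist 0 (frontier (f '' 𝔻)) := by
  have hcover : ball 0 (Real.exp (-D)) ⊆ f '' 𝔻 := by
    have hball := ball_subset_image_ball_of_le_norm one_pos hf.1 hf.2.1 (Real.exp_pos (-D))
      fun z hz => (hf.norm_le_and_le_norm hfD hz).1
    rwa [mul_one] at hball
  have hbounded : Bornology.IsBounded (f '' 𝔻) := by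
    refine (isBounded_iff_forall_norm_le).2 ⟨Real.exp D, ?_⟩
    rintro _ ⟨z, hz, rfl⟩
    exact (hf.norm_le_and_le_norm hfD hz).2.trans
      (mul_le_of_le_one_right (Real.exp_pos _).le (mem_ball_zero_iff.1 hz).le)
  have hnonempty : (f '' 𝔻).Nonempty := ⟨f 0, 0, mem_ball_self one_pos, rfl⟩
  exact le_infDist_frontier_of_ball_subset (frontier_nonempty_of_isBounded hnonempty hbounded)
    hcover

end IsClassA

lemma mul_exp_le_exp_neg {D r : ℝ} (h : r * Real.exp (D * (1 + r)) ≤ 1) :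
    r * Real.exp (D * r) ≤ Real.exp (-D) := by
  rwa [Real.exp_neg, ← one_div, le_div_iff₀ (Real.exp_pos D), mul_assoc,
    ← Real.exp_add, ← mul_add_one, add_comm r]

lemma le_one_third_of_mul_exp_le_one {D r : ℝ} (hD : 3 / 4 * Real.log 3 ≤ D)
    (h : r * Real.exp (D * (1 + r)) ≤ 1) : r ≤ 1 / 3 := by
  by_contra! hr
  have hlog_pos : 0 < Real.log 3 := Real.log_pos (by norm_num)
  have hlog : Real.log 3 < D * (1 + r) :=
    calc Real.log 3 = 3 / 4 * Real.log 3 * (1 + 1 / 3) := by ring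
      _ ≤ D * (1 + 1 / 3) := by gcongr
      _ < D * (1 + r) := by
        have hD_pos : 0 < D := by linarith
        gcongr
  have hexp : 3 < Real.exp (D * (1 + r)) := (Real.log_lt_iff_lt_exp (by norm_num)).1 hlog
  have : 1 < r * Real.exp (D * (1 + r)) :=
    calc (1 : ℝ) = 1 / 3 * 3 := by norm_num
      _ < r * Real.exp (D * (1 + r)) := by gcongr
  exact this.not_ge h

theorem stmt19_general {D : ℝ} {f g : ℂ → ℂ} (hf : IsClassA f)
    (hfD : ∀ z ∈ 𝔻, z ≠ 0 → f z ≠ 0 ∧ ‖z * deriv f z / f z - 1‖ ≤ D) (hsub : Subordinate g f)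
    {b : ℕ → ℂ} (hrep : ∀ z ∈ 𝔻, HasSum (fun k => b k * z ^ k) (g z)) {r : ℝ} (hr : 0 ≤ r)
    (hr3 : r ≤ 1 / 3) (hrD : r * Real.exp (D * (1 + r)) ≤ 1) :
    Summable (fun k : ℕ => ‖b k‖ * r ^ k) ∧
      ∑' k : ℕ, ‖b k‖ * r ^ k ≤ infDist 0 (frontier (f '' 𝔻)) := by
  have half_mem : (1 / 2 : ℂ) ∈ 𝔻 := mem_ball_zero_iff.2 (by norm_num)
  have hD : 0 ≤ D := (norm_nonneg _).trans (hfD (1 / 2) half_mem (by norm_num)).2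
  lift D to ℝ≥0 using hD
  lift r to ℝ≥0 using hr
  have hr3' : 3 * (r : ℝ) ≤ 1 := by linarith
  have hrep_nhds : ∀ᶠ z in 𝓝 0, HasSum (fun k => b k * z ^ k) (g z) := by
    filter_upwards [ball_mem_nhds (0 : ℂ) one_pos] with z hz using hrep z hz
  refine summable_and_tsum_le_of_tsum_enorm_le infDist_nonneg ?_
  calc ∑' k, ‖b k‖ₑ * (r : ℝ≥0∞) ^ k
      = majorantSeries g r := (majorantSeries_eq_of_hasSum hrep_nhds).symm
    _ ≤ majorantSeries f r := hsub.majorantSeries_le hf.analyticAt_zero hr3'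
    _ ≤ ENNReal.ofReal (r * Real.exp (D * r)) := hf.majorantSeries_le hfD hr3'
    _ ≤ ENNReal.ofReal (infDist 0 (frontier (f '' 𝔻))) :=
        ENNReal.ofReal_le_ofReal
          ((mul_exp_le_exp_neg hrD).trans (hf.exp_neg_le_infDist_frontier hfD))

theorem stmt19 (D : ℝ) (hD1 : (3/4) * Real.log 3 ≤ D) (hD2 : D ≤ 1)
    (f g : ℂ → ℂ) (hf : IsClassA f)
    (hfD : ∀ z ∈ 𝔻, z ≠ 0 → f z ≠ 0 ∧ ‖z * deriv f z / f z - 1‖ < D)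
    (hg : DifferentiableOn ℂ g 𝔻) (hg0 : g 0 = 0) (hsub : Subordinate g f)
    (b : ℕ → ℂ) (hb0 : b 0 = 0)
    (hrep : ∀ z ∈ 𝔻, HasSum (fun k => b k * z^k) (g z))
    (r₀ : ℝ) (hr₀ : 0 < r₀) (hr₀1 : r₀ < 1)
    (heq : r₀ * Real.exp (D * (1 + r₀)) = 1) :
    ∀ r : ℝ, 0 ≤ r → r ≤ r₀ →
      Summable (fun k : ℕ => ‖b k‖ * r^k) ∧
      ∑' k : ℕ, ‖b k‖ * r^k ≤ Metric.infDist 0 (frontier (f '' 𝔻)) := by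
  intro r hr hrr₀
  have hD : 0 ≤ D := (by positivity : 0 ≤ 3 / 4 * Real.log 3).trans hD1
  have hrD : r * Real.exp (D * (1 + r)) ≤ 1 := le_of_le_of_eq (by gcongr) heq
  exact stmt19_general hf (fun z hz hz0 => (hfD z hz hz0).imp_right le_of_lt) hsub hrep hr
    (le_one_third_of_mul_exp_le_one hD1 hrD) hrD
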